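/- Let N ≥ 1 and let n₁ > n₂ > … > n_N ≥ 0 be strictly decreasing nonnegative integers. Then in ℤ[x₁,…,x_N] the alternant Σ_{σ ∈ S_N} sgn(σ)·Π_{i=1}^N x_{σ(i)}^{n_i} is divisible by the Vandermonde product Π_{1≤i<j≤N} (x_i − x_j), and the quotient is a symmetric polynomial (the Schur polynomial s_λ for the partition λ with λ_i = n_i − N + i). -/

import Mathlib

open MvPolynomial

theorem aux_rename (N : ℕ) (n : Fin N → ℕ) (σ : Equiv.Perm (Fin N)) :
    rename σ (Matrix.det (Matrix.of fun i j : Fin N => (X i : MvPolynomial (Fin N) ℤ) ^ n j)) =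
      ((Equiv.Perm.sign σ : ℤ) : MvPolynomial (Fin N) ℤ) *
        Matrix.det (Matrix.of fun i j : Fin N => (X i : MvPolynomial (Fin N) ℤ) ^ n j) := by
  rw [← Matrix.det_permute, AlgHom.map_det]
  congr 1
  ext1 i j
  simp [Matrix.submatrix]

theorem aux_factor (N : ℕ) (n : Fin N → ℕ) :
    ∃ s : MvPolynomial (Fin N) ℤ,
      Matrix.det (Matrix.of fun i j : Fin N => (X i : MvPolynomial (Fin N) ℤ) ^ n j) =
      Matrix.det (Matrix.vandermonde fun i : Fin N => (X i : MvPolynomial (Fin N) ℤ)) * s := by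
  let P : Polynomial (MvPolynomial (Fin N) ℤ) := ∏ i, (Polynomial.X - Polynomial.C (X i))
  have hP : P.Monic := Polynomial.monic_prod_of_monic _ _ fun i _ => Polynomial.monic_X_sub_C _
  have hd : P.degree = N := by
    simp [P, Polynomial.degree_prod]
  refine ⟨Matrix.det (Matrix.of fun i j : Fin N =>
    ((Polynomial.X ^ n j : Polynomial (MvPolynomial (Fin N) ℤ)) %ₘ P).coeff i), ?_⟩
  rw [← Matrix.det_mul]
  congr 1
  ext1 i j
  have hr : P.eval (X i) = 0 := by
    simp only [P, Polynomial.eval_prod]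
    exact Finset.prod_eq_zero (Finset.mem_univ i) (by simp)
  have h1 := congrArg (Polynomial.eval (X i))
    (Polynomial.modByMonic_add_div (Polynomial.X ^ n j) P)
  have h2 : ((Polynomial.X ^ n j : Polynomial (MvPolynomial (Fin N) ℤ)) %ₘ P).degree < N :=
    hd ▸ Polynomial.degree_modByMonic_lt _ hP
  simp only [Polynomial.eval_add, Polynomial.eval_mul, hr, zero_mul, add_zero,
    Polynomial.eval_pow, Polynomial.eval_X] at h1
  rw [Matrix.mul_apply, Matrix.of_apply, ← h1]
  by_cases h0 : ((Polynomial.X ^ n j : Polynomial (MvPolynomial (Fin N) ℤ)) %ₘ P) = 0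
  · simp [h0]
  rw [Polynomial.eval_eq_sum_range' ((Polynomial.natDegree_lt_iff_degree_lt h0).2 h2),
    ← Fin.sum_univ_eq_sum_range
      (fun k => ((Polynomial.X ^ n j : Polynomial (MvPolynomial (Fin N) ℤ)) %ₘ P).coeff k * X i ^ k)]
  simp [Matrix.vandermonde_apply, mul_comm]

theorem stmt16 (N : ℕ) (hN : 1 ≤ N) (n : Fin N → ℕ) (hn : StrictAnti n) :
    ∃ s : MvPolynomial (Fin N) ℤ,
      -- the alternant is the Vandermonde product times `s` …
      (∑ σ : Equiv.Perm (Fin N), (Equiv.Perm.sign σ : ℤ) • ∏ i, (X (σ i) : MvPolynomial (Fin N) ℤ) ^ n i) =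
        (∏ x ∈ Finset.univ.filter (fun x : Fin N × Fin N => x.1 < x.2),
          ((X x.1 : MvPolynomial (Fin N) ℤ) - X x.2)) * s ∧
      -- … and `s` is a symmetric polynomial
      s.IsSymmetric := by
  obtain ⟨s, hs⟩ := aux_factor N n
  have hV0 : Matrix.det (Matrix.vandermonde fun i : Fin N => (X i : MvPolynomial (Fin N) ℤ)) ≠ 0 :=
    Matrix.det_vandermonde_ne_zero_iff.2 (X_injective)
  have hsym : s.IsSymmetric := by
    intro σ
    have h1 := aux_rename N n σ
    have h2 : rename σ (Matrix.det (Matrix.vandermonde fun i : Fin N => (X i : MvPolynomial (Fin N) ℤ))) = _ :=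
      aux_rename N (fun i => (i : ℕ)) σ
    change _ = _ * Matrix.det (Matrix.vandermonde fun i : Fin N => (X i : MvPolynomial (Fin N) ℤ)) at h2
    rw [hs, map_mul, h2, ← mul_assoc] at h1
    refine mul_left_cancel₀ (mul_ne_zero ?_ hV0) h1
    rcases Int.units_eq_one_or (Equiv.Perm.sign σ) with h | h <;> simp [h]
  set k := (Finset.univ.filter (fun x : Fin N × Fin N => x.1 < x.2)).card with hk
  have hprod : (∏ x ∈ Finset.univ.filter (fun x : Fin N × Fin N => x.1 < x.2),
          ((X x.1 : MvPolynomial (Fin N) ℤ) - X x.2)) =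
      (-1) ^ k * Matrix.det (Matrix.vandermonde fun i : Fin N => (X i : MvPolynomial (Fin N) ℤ)) := by
    rw [Matrix.det_vandermonde]
    have : (∏ i : Fin N, ∏ j ∈ Finset.Ioi i, ((X j : MvPolynomial (Fin N) ℤ) - X i)) =
        ∏ x ∈ Finset.univ.filter (fun x : Fin N × Fin N => x.1 < x.2),
          ((X x.2 : MvPolynomial (Fin N) ℤ) - X x.1) := by
      rw [Finset.prod_filter, Fintype.prod_prod_type]
      refine Finset.prod_congr rfl fun i _ => ?_
      rw [← Finset.prod_filter]
      refine Finset.prod_congr ?_ fun _ _ => rfl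
      ext; simp
    rw [this, hk, ← Finset.prod_const, ← Finset.prod_mul_distrib]
    exact Finset.prod_congr rfl fun _ _ => by ring
  refine ⟨(-1) ^ k * s, ?_, ?_⟩
  · rw [hprod]
    have h3 : ((-1 : MvPolynomial (Fin N) ℤ) ^ k) * (-1) ^ k = 1 := by
      rw [← mul_pow]; simp
    rw [mul_mul_mul_comm, h3, one_mul, ← hs, Matrix.det_apply]
    rfl
  · intro σ
    rw [map_mul, hsym σ]
    simp
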